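/- arXiv:2510.10698 — 7 statements merged into one kernel-verified Lean document; each statement's English description precedes it below -/
import Mathlib

section
/- For every instance of the asymmetric chore division problem (any number n of agents, any number m of chores, nonnegative additive cost functions, positive entitlements summing to 1), there exists an assignment ⟨S_1,…,S_n⟩ of all the chores to the agents such that V_i(S_i) ≤ 20·WMMS_i for every agent i; that is, a 20-WMMS assignment always exists. -/
open Finset

/-- Cost of a bundle `S` of chores to agent `i`, given per-chore costs `V`. -/
noncomputable def costOf {n m : ℕ} (V : Fin n → Fin m → ℝ) (i : Fin n)
    (S : Finset (Fin m)) : ℝ :=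
  ∑ b ∈ S, V i b

/-- `A` is an `n`-partition of the chores: pairwise disjoint bundles whose union
is the set of all chores. -/
def IsPartition {n m : ℕ} (A : Fin n → Finset (Fin m)) : Prop :=
  (∀ j k, j ≠ k → Disjoint (A j) (A k)) ∧ Finset.univ.biUnion A = Finset.univ

/-- Weighted maximin share of agent `i` under entitlements `w`. -/
noncomputable def WMMS {n m : ℕ} (V : Fin n → Fin m → ℝ) (w : Fin n → ℝ)
    (i : Fin n) : ℝ :=
  sInf { x | ∃ A : Fin n → Finset (Fin m), IsPartition A ∧
    x = ⨆ j, costOf V i (A j) * (w i / w j) }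

/-- Unweighted maximin share of agent `i`. -/
noncomputable def MMS {n m : ℕ} (V : Fin n → Fin m → ℝ) (i : Fin n) : ℝ :=
  sInf { x | ∃ A : Fin n → Finset (Fin m), IsPartition A ∧
    x = ⨆ j, costOf V i (A j) }

/-!
Scale the costs of agent `i` so that its weighted maximin share becomes `w i`; then each agent knows
a packing of all chores in which bundle `j` costs at most `w j`. It suffices to find an assignment
in which every agent pays `O(w i)`.

By a minimax argument, a fractional such assignment supported on pairs with `c i b ≤ w i` exists as
soon as, for all prices `z ≥ 0`, some assignment with `c (f b) b ≤ w (f b)` has priced cost at most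
`8 * ∑ z j * w j`. To find it, let `i` be the heaviest agent whose price is within a factor two of
the smallest price, give `i` every chore with `c i b ≤ w i`, and recurse. The chores left over are
larger than `w i` in the eyes of `i`, so its packing puts them into agents heavier than `i`. All of
those have at least twice the smallest price, so the losses of the successive rounds form a
geometric series.

The fractional assignment is rounded by Hall's theorem, which controls for every agent the number of
chores of each dyadic cost class; the rounding errors again form a geometric series.
-/

section Packing

variable {ι β : Type*} [Fintype β] [DecidableEq ι]

/-- The assignment `a` of chores with costs `c` to agents respects the capacities `u`: the bundle of
agent `j` costs at most `u j`. All bundles are measured by the same cost function `c`, that of a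
single agent. -/
def IsPacking (c : β → ℝ) (u : ι → ℝ) (a : β → ι) : Prop :=
  ∀ j, ∑ b with a b = j, c b ≤ u j

variable {c : β → ℝ} {u : ι → ℝ} {a : β → ι}

lemma IsPacking.cost_le (ha : IsPacking c u a) (hc : ∀ b, 0 ≤ c b) (b : β) : c b ≤ u (a b) :=
  (single_le_sum (fun b' _ => hc b') (by simp)).trans (ha (a b))

variable [Fintype ι]

lemma IsPacking.sum_le_sum_capacity_of_lt (ha : IsPacking c u a) (hc : ∀ b, 0 ≤ c b) {t : ℝ}
    {B : Finset β} (hB : ∀ b ∈ B, t < c b) : ∑ b ∈ B, c b ≤ ∑ j with t < u j, u j := by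
  have maps_to : ∀ b ∈ B, a b ∈ ({j | t < u j} : Finset ι) := fun b hb => by
    simpa using (hB b hb).trans_le (ha.cost_le hc b)
  rw [← sum_fiberwise_of_maps_to maps_to]
  refine sum_le_sum fun j _ => le_trans ?_ (ha j)
  exact sum_le_sum_of_subset_of_nonneg (filter_subset_filter _ (subset_univ B)) fun b _ _ => hc b

lemma IsPacking.sum_le_two_mul_sum_capacity (ha : IsPacking c u a) (hc : ∀ b, 0 ≤ c b)
    {c' : β → ℝ} {a' : β → ι} (ha' : IsPacking c' u a') (hc' : ∀ b, 0 ≤ c' b)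
    {t : ℝ} {B : Finset β} (hB : ∀ b ∈ B, t < c' b) :
    ∑ b ∈ B, c b ≤ 2 * ∑ j with t < u j, u j := by
  have small : ∑ b ∈ B with c b ≤ t, c b ≤ ∑ j with t < u j, u j :=
    calc ∑ b ∈ B with c b ≤ t, c b
        ≤ ∑ b ∈ B with c b ≤ t, c' b := sum_le_sum fun b hb =>
          (mem_filter.1 hb).2.trans (hB b (mem_filter.1 hb).1).le
      _ ≤ ∑ j with t < u j, u j :=
          ha'.sum_le_sum_capacity_of_lt hc' fun b hb => hB b (mem_filter.1 hb).1
  have large : ∑ b ∈ B with ¬c b ≤ t, c b ≤ ∑ j with t < u j, u j :=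
    ha.sum_le_sum_capacity_of_lt hc fun b hb => not_le.1 (mem_filter.1 hb).2
  rw [← sum_filter_add_sum_filter_not B (fun b => c b ≤ t)]
  linarith

end Packing

section PricedAssignment

variable {ι β : Type*}

lemma exists_heaviest_nearly_cheapest [Finite ι] (w : ι → ℝ) {z : ι → ℝ} (hz : ∀ j, 0 ≤ z j) {t : ℝ}
    (ht : ∃ j, t < w j) :
    ∃ i p, t < w i ∧ z i ≤ 2 * z p ∧ t < w p ∧ (∀ j, t < w j → z p ≤ z j) ∧
      ∀ j, w i < w j → 2 * z p ≤ z j := by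
  have := Fintype.ofFinite ι
  obtain ⟨p, hp, hpmin⟩ := exists_min_image {j | t < w j} z (by simpa [Finset.Nonempty] using ht)
  simp only [mem_filter_univ] at hp hpmin
  obtain ⟨i, hi, himax⟩ := exists_max_image {j | t < w j ∧ z j ≤ 2 * z p} w
    ⟨p, by simpa [hp] using by linarith [hz p]⟩
  simp only [mem_filter_univ] at hi himax
  refine ⟨i, p, hi.1, hi.2, hp, hpmin, fun j hij => ?_⟩
  by_contra! hj
  exact hij.not_ge (himax j ⟨hi.1.trans hij, hj.le⟩)

lemma sum_price_ite (z : ι → ℝ) (c : ι → β → ℝ) (B : Finset β) (i : ι) (q : β → Prop)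
    [DecidablePred q] (f : β → ι) :
    ∑ b ∈ B, z (if q b then i else f b) * c (if q b then i else f b) b =
      z i * ∑ b ∈ B with q b, c i b + ∑ b ∈ B with ¬q b, z (f b) * c (f b) b := by
  rw [← sum_filter_add_sum_filter_not B q, mul_sum]
  congr 1 <;> refine sum_congr rfl fun b hb => ?_ <;> simp [(mem_filter.1 hb).2]

variable [Fintype ι]

/-- The potential bounding the priced cost of the chores that some agent finds larger than `t`, when
all agents heavier than `t` have price at least `μ`. The term `-4 * μ` lets a factor-two increase of
`μ` pay for one round of the recursion. -/
noncomputable def pricePotential (w z : ι → ℝ) (t μ : ℝ) : ℝ :=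
  ∑ j with t < w j, w j * (8 * z j - 4 * μ)

variable {w z : ι → ℝ}

lemma four_mul_add_pricePotential_le (hw : ∀ j, 0 ≤ w j) {t s μ ν : ℝ} (hts : t ≤ s) (hμν : μ ≤ ν)
    (hν : ∀ j, t < w j → ν ≤ z j) :
    4 * ν * ∑ j with t < w j, w j + pricePotential w z s (2 * ν) ≤ pricePotential w z t μ :=
  calc 4 * ν * ∑ j with t < w j, w j + pricePotential w z s (2 * ν)
      ≤ 4 * ν * ∑ j with t < w j, w j + pricePotential w z t (2 * ν) := by
        gcongr
        refine sum_le_sum_of_subset_of_nonneg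
          (monotone_filter_right _ fun j _ => hts.trans_lt) fun j hj _ => ?_
        exact mul_nonneg (hw j) (by linarith [hν j (by simpa using hj)])
    _ = pricePotential w z t ν := by
        rw [pricePotential, mul_sum, ← sum_add_distrib]
        exact sum_congr rfl fun j _ => by ring
    _ ≤ pricePotential w z t μ := by
        unfold pricePotential
        gcongr with j
        exact hw j

variable [Fintype β] [DecidableEq ι] {c : ι → β → ℝ} {a : ι → β → ι}

lemma exists_assignment_price_le_pricePotential (hw : ∀ j, 0 ≤ w j) (hc : ∀ i b, 0 ≤ c i b)
    (ha : ∀ i, IsPacking (c i) w (a i)) (hz : ∀ j, 0 ≤ z j) {t μ : ℝ} {B : Finset β} {k : ι}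
    (hB : ∀ b ∈ B, t < c k b) (hμ : ∀ j, t < w j → μ ≤ z j) :
    ∃ f : β → ι, (∀ b ∈ B, c (f b) b ≤ w (f b)) ∧
      ∑ b ∈ B, z (f b) * c (f b) b ≤ pricePotential w z t μ := by
  induction hN : #{j | t < w j} using Nat.strong_induction_on generalizing t μ B k with
  | _ N ih =>
  subst hN
  by_cases heavy : ∃ j, t < w j
  swap
  · have : B = ∅ := eq_empty_of_forall_notMem fun b hb =>
      heavy ⟨a k b, (hB b hb).trans_le ((ha k).cost_le (hc k) b)⟩
    exact ⟨fun _ => k, by simp [this], by simp [this, pricePotential, not_exists.1 heavy]⟩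
  obtain ⟨i, p, hti, hzi, hp, hpmin, hjump⟩ := exists_heaviest_nearly_cheapest w hz heavy
  have card_heavier_lt : #{j | w i < w j} < #{j | t < w j} := by
    refine card_lt_card <| (ssubset_iff_of_subset ?_).2 ⟨i, by simpa using hti, by simp⟩
    exact monotone_filter_right _ fun j _ => hti.trans
  obtain ⟨f, hf, hfsum⟩ := ih _ card_heavier_lt (B := {b ∈ B | ¬c i b ≤ w i})
    (fun b hb => not_le.1 (mem_filter.1 hb).2) hjump rfl
  refine ⟨fun b => if c i b ≤ w i then i else f b, fun b hb => ?_, ?_⟩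
  · by_cases h : c i b ≤ w i
    · simpa only [if_pos h] using h
    · simpa only [if_neg h] using hf b (mem_filter.2 ⟨hb, h⟩)
  have taken : ∑ b ∈ B with c i b ≤ w i, c i b ≤ 2 * ∑ j with t < w j, w j :=
    (ha i).sum_le_two_mul_sum_capacity (hc i) (ha k) (hc k) fun b hb => hB b (mem_filter.1 hb).1
  calc ∑ b ∈ B, z (if c i b ≤ w i then i else f b) * c (if c i b ≤ w i then i else f b) b
      = z i * ∑ b ∈ B with c i b ≤ w i, c i b +
          ∑ b ∈ B with ¬c i b ≤ w i, z (f b) * c (f b) b := sum_price_ite z c B i _ f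
    _ ≤ 2 * z p * (2 * ∑ j with t < w j, w j) + pricePotential w z (w i) (2 * z p) := by
        gcongr
        · exact sum_nonneg fun b _ => hc i b
        · linarith [hz p]
    _ = 4 * z p * ∑ j with t < w j, w j + pricePotential w z (w i) (2 * z p) := by ring
    _ ≤ pricePotential w z t μ := four_mul_add_pricePotential_le hw hti.le (hμ p hp) hpmin

lemma exists_assignment_price_le [Nonempty ι] (hw : ∀ j, 0 ≤ w j) (hc : ∀ i b, 0 ≤ c i b)
    (ha : ∀ i, IsPacking (c i) w (a i)) (hz : ∀ j, 0 ≤ z j) :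
    ∃ f : β → ι, (∀ b, c (f b) b ≤ w (f b)) ∧
      ∑ b, z (f b) * c (f b) b ≤ ∑ j, z j * (8 * w j) := by
  obtain ⟨f, hf, hfsum⟩ := exists_assignment_price_le_pricePotential hw hc ha hz (t := -1) (μ := 0)
    (B := univ) (k := Classical.arbitrary ι) (fun b _ => neg_one_lt_zero.trans_le (hc _ b))
    fun j _ => hz j
  refine ⟨f, fun b => hf b (mem_univ b), hfsum.trans_eq ?_⟩
  rw [pricePotential, filter_true_of_mem fun j _ => neg_one_lt_zero.trans_le (hw j)]
  exact sum_congr rfl fun j _ => by ring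

end PricedAssignment

section FractionalAssignment

variable {ι β : Type*}

lemma nonpos_of_forall_le_lt_apply {E : Type*} [AddCommGroup E] [PartialOrder E]
    [IsOrderedAddMonoid E] [Module ℝ E] [PosSMulMono ℝ E] {φ : E →ₗ[ℝ] ℝ} {u : E} {v : ℝ}
    (h : ∀ y ≤ u, v < φ y) {d : E} (hd : 0 ≤ d) : φ d ≤ 0 := by
  by_contra! hφ
  have hr : 0 ≤ (φ u - v) / φ d := div_nonneg (sub_nonneg.2 (h u le_rfl).le) hφ.le
  have := h (u - ((φ u - v) / φ d) • d) (sub_le_self u (smul_nonneg hr hd))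
  rw [map_sub, map_smul, smul_eq_mul, div_mul_cancel₀ _ hφ.ne'] at this
  linarith

variable [Fintype ι]

lemma exists_mem_le_of_forall_dotProduct_le {K : Set (ι → ℝ)} (hconv : Convex ℝ K)
    (hcomp : IsCompact K) {u : ι → ℝ} (h : ∀ z, 0 ≤ z → ∃ y ∈ K, z ⬝ᵥ y ≤ z ⬝ᵥ u) :
    ∃ y ∈ K, y ≤ u := by
  classical
  by_contra! hK
  obtain ⟨φ, s, v, hφK, hsv, hφu⟩ := geometric_hahn_banach_compact_closed hconv hcomp
    (convex_Iic u) isClosed_Iic (Set.disjoint_left.2 hK)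
  have hφ (y : ι → ℝ) : -φ y = (fun i => -φ (Pi.single i 1)) ⬝ᵥ y := by
    conv_lhs => rw [pi_eq_sum_univ' y, map_sum]
    simp [dotProduct, mul_comm]
  obtain ⟨y, hy, hyu⟩ := h (fun i => -φ (Pi.single i 1)) fun i => neg_nonneg.2 <|
    nonpos_of_forall_le_lt_apply (φ := φ.toLinearMap) hφu (Pi.single_nonneg.2 zero_le_one)
  rw [← hφ, ← hφ, neg_le_neg_iff] at hyu
  linarith [hφK y hy, hφu u Set.self_mem_Iic]

/-- The row-stochastic matrices `x`, where `x b i` is the fraction of chore `b` given to agent `i`,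
in which chore `b` is only shared among agents `i` with `P i b`. -/
def fractionalAssignments (P : ι → β → Prop) : Set (β → ι → ℝ) :=
  Set.univ.pi fun b => stdSimplex ℝ ι ∩ {p | ∀ i, ¬P i b → p i = 0}

lemma convex_fractionalAssignments (P : ι → β → Prop) : Convex ℝ (fractionalAssignments P) := by
  refine convex_pi fun b _ => (convex_stdSimplex ℝ ι).inter ?_
  intro p hp q hq r s _ _ _ i hi
  simp [hp i hi, hq i hi]

lemma isCompact_fractionalAssignments (P : ι → β → Prop) :
    IsCompact (fractionalAssignments P) := by
  refine isCompact_univ_pi fun b => (isCompact_stdSimplex ℝ ι).inter_right ?_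
  simp only [Set.ofPred_forall]
  exact isClosed_iInter fun i => isClosed_iInter fun _ =>
    isClosed_eq (continuous_apply i) continuous_const

lemma single_mem_fractionalAssignments [DecidableEq ι] {P : ι → β → Prop} {f : β → ι}
    (hf : ∀ b, P (f b) b) : (fun b => Pi.single (f b) 1) ∈ fractionalAssignments P := by
  refine fun b _ => ⟨single_mem_stdSimplex ℝ (f b), fun i hi => Pi.single_eq_of_ne ?_ _⟩
  rintro rfl
  exact hi (hf b)

variable [Fintype β]

/-- The vector of the agents' costs under a fractional assignment, where `c i b` is the cost of
chore `b` to agent `i`. -/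
def fractionalLoad (c : ι → β → ℝ) : (β → ι → ℝ) →ₗ[ℝ] ι → ℝ where
  toFun x i := ∑ b, x b i * c i b
  map_add' x y := by ext i; simp [add_mul, sum_add_distrib]
  map_smul' r x := by ext i; simp [mul_sum, mul_assoc]

lemma dotProduct_fractionalLoad_single [DecidableEq ι] (c : ι → β → ℝ) (z : ι → ℝ) (f : β → ι) :
    z ⬝ᵥ fractionalLoad c (fun b => Pi.single (f b) 1) = ∑ b, z (f b) * c (f b) b := by
  simp only [dotProduct, fractionalLoad, LinearMap.coe_mk, AddHom.coe_mk, mul_sum]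
  rw [sum_comm]
  simp [Pi.single_apply]

lemma exists_fractionalLoad_le {P : ι → β → Prop} {c : ι → β → ℝ} {u : ι → ℝ}
    (h : ∀ z : ι → ℝ, (∀ i, 0 ≤ z i) →
      ∃ f : β → ι, (∀ b, P (f b) b) ∧ ∑ b, z (f b) * c (f b) b ≤ ∑ i, z i * u i) :
    ∃ x ∈ fractionalAssignments P, fractionalLoad c x ≤ u := by
  classical
  simpa using exists_mem_le_of_forall_dotProduct_le
    ((convex_fractionalAssignments P).linear_image (fractionalLoad c))
    ((isCompact_fractionalAssignments P).image
      (fractionalLoad c).continuous_of_finiteDimensional) fun z hz => by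
    obtain ⟨f, hf, hfz⟩ := h z hz
    exact ⟨_, Set.mem_image_of_mem _ (single_mem_fractionalAssignments hf),
      (dotProduct_fractionalLoad_single c z f).trans_le hfz⟩

end FractionalAssignment

section Rounding

variable {ι β κ : Type*} [Fintype β] [DecidableEq κ]

lemma card_le_sum_ceil_of_sum_eq_one {E : β → Finset κ} {y : β → κ → ℝ} (hy : ∀ b q, 0 ≤ y b q)
    (hsum : ∀ b, ∑ q ∈ E b, y b q = 1) (s : Finset β) :
    #s ≤ ∑ q ∈ s.biUnion E, ⌈∑ b with q ∈ E b, y b q⌉₊ := by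
  have : (#s : ℝ) ≤ ∑ q ∈ s.biUnion E, (⌈∑ b with q ∈ E b, y b q⌉₊ : ℝ) :=
    calc (#s : ℝ) = ∑ b ∈ s, ∑ q ∈ E b, y b q := by simp [hsum]
      _ = ∑ q ∈ s.biUnion E, ∑ b ∈ s with q ∈ E b, y b q :=
          sum_comm' fun b q => by simp only [mem_filter, mem_biUnion]; tauto
      _ ≤ ∑ q ∈ s.biUnion E, ∑ b with q ∈ E b, y b q := by
          gcongr with q
          · exact fun b _ _ => hy b q
          · exact subset_univ s
      _ ≤ ∑ q ∈ s.biUnion E, (⌈∑ b with q ∈ E b, y b q⌉₊ : ℝ) :=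
          sum_le_sum fun q _ => Nat.le_ceil _
  exact_mod_cast this

lemma exists_forall_card_fiber_le_ceil {E : β → Finset κ} {y : β → κ → ℝ}
    (hy : ∀ b q, 0 ≤ y b q) (hsum : ∀ b, ∑ q ∈ E b, y b q = 1) :
    ∃ g : β → κ, (∀ b, g b ∈ E b) ∧ ∀ q, #{b | g b = q} ≤ ⌈∑ b with q ∈ E b, y b q⌉₊ := by
  -- Hall's theorem, with `q` replaced by as many clones as it may receive elements.
  let clones (q : κ) : Finset ℕ := range ⌈∑ b with q ∈ E b, y b q⌉₊
  have hall (s : Finset β) : #s ≤ #(s.biUnion fun b => (E b).sigma fun q => clones q) := by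
    have : (s.biUnion fun b => (E b).sigma fun q => clones q) = (s.biUnion E).sigma clones := by
      ext ⟨q, l⟩
      simp only [mem_biUnion, mem_sigma]
      tauto
    simpa [this, clones] using card_le_sum_ceil_of_sum_eq_one hy hsum s
  obtain ⟨g, hg, hgE⟩ := (all_card_le_biUnion_card_iff_exists_injective _).1 hall
  refine ⟨fun b => (g b).1, fun b => (mem_sigma.1 (hgE b)).1, fun q => ?_⟩
  rw [← card_range ⌈_⌉₊]
  refine card_le_card_of_injOn (fun b => (g b).2) (fun b hb => ?_) fun b hb b' hb' h => hg ?_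
  · rw [← (mem_filter.1 hb).2]
    exact (mem_sigma.1 (hgE b)).2
  · exact Sigma.ext ((mem_filter.1 hb).2.trans (mem_filter.1 hb').2.symm) (heq_of_eq h)

variable [Fintype ι] [DecidableEq ι]

lemma exists_forall_card_fiber_class_le {x : β → ι → ℝ} (hx : ∀ b, x b ∈ stdSimplex ℝ ι)
    (cls : ι → β → κ) :
    ∃ f : β → ι, (∀ b, x b (f b) ≠ 0) ∧
      ∀ i k, (#{b | f b = i ∧ cls i b = k} : ℝ) ≤ ∑ b with cls i b = k, x b i + 1 := by
  let E (b : β) : Finset (ι × κ) :=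
    ({i | x b i ≠ 0} : Finset ι).image fun i => (i, cls i b)
  have mem_E (b : β) (q : ι × κ) : q ∈ E b ↔ x b q.1 ≠ 0 ∧ cls q.1 b = q.2 := by
    simp only [E, mem_image, mem_filter_univ, Prod.ext_iff]
    grind
  have hsum (b : β) : ∑ q ∈ E b, x b q.1 = 1 := by
    rw [sum_image fun i _ j _ h => (Prod.ext_iff.1 h).1, sum_filter_ne_zero, (hx b).2]
  obtain ⟨g, hgE, hg⟩ := exists_forall_card_fiber_le_ceil (E := E) (y := fun b q => x b q.1)
    (fun b q => (hx b).1 q.1) hsum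
  simp only [mem_E] at hgE hg
  refine ⟨fun b => (g b).1, fun b => (hgE b).1, fun i k => ?_⟩
  have card_eq : #{b | (g b).1 = i ∧ cls i b = k} = #{b | g b = (i, k)} := by
    refine congrArg card (filter_congr fun b _ => ?_)
    rw [Prod.ext_iff]
    exact and_congr_right fun hi => by rw [← (hgE b).2, hi]
  have sum_eq : ∑ b with x b i ≠ 0 ∧ cls i b = k, x b i = ∑ b with cls i b = k, x b i := by
    rw [← sum_filter_ne_zero ({b | cls i b = k} : Finset β), filter_filter]
    simp only [and_comm]
  calc (#{b | (g b).1 = i ∧ cls i b = k} : ℝ)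
      ≤ ⌈∑ b with cls i b = k, x b i⌉₊ := by
        rw [card_eq, ← sum_eq]
        exact_mod_cast hg (i, k)
    _ ≤ ∑ b with cls i b = k, x b i + 1 :=
        (Nat.ceil_lt_add_one (sum_nonneg fun b _ => (hx b).1 i)).le

end Rounding

section DyadicCeil

/-- The least power of two that is at least `r`, with `0` rounded to itself; it is used to group
costs into geometrically decreasing classes. On negative numbers the value is `1`. -/
noncomputable def dyadicCeil (r : ℝ) : ℝ :=
  if r = 0 then 0 else 2 ^ Int.clog 2 r

lemma dyadicCeil_nonneg (r : ℝ) : 0 ≤ dyadicCeil r := by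
  unfold dyadicCeil
  split_ifs <;> positivity

lemma le_dyadicCeil (r : ℝ) : r ≤ dyadicCeil r := by
  unfold dyadicCeil
  split_ifs with h
  · exact h.le
  · exact_mod_cast Int.self_le_zpow_clog one_lt_two r

lemma dyadicCeil_le_two_mul {r : ℝ} (hr : 0 ≤ r) : dyadicCeil r ≤ 2 * r := by
  rcases hr.eq_or_lt with rfl | hr
  · simp [dyadicCeil]
  · have : (2 : ℝ) ^ (Int.clog 2 r - 1) < r := by
      exact_mod_cast Int.zpow_pred_clog_lt_self one_lt_two hr
    rw [zpow_sub_one₀ two_ne_zero] at this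
    rw [dyadicCeil, if_neg hr.ne']
    linarith

lemma dyadicCeil_eq_zero_or_eq_pow {r : ℝ} (hr : r ≤ 1) :
    dyadicCeil r = 0 ∨ dyadicCeil r = (1 / 2) ^ Nat.log 2 ⌊r⁻¹⌋₊ := by
  unfold dyadicCeil
  split_ifs
  · exact .inl rfl
  · rw [Int.clog_of_right_le_one 2 hr, zpow_neg, zpow_natCast, one_div, inv_pow]
    exact .inr rfl

lemma sum_image_dyadicCeil_le_two {β : Type*} {T : Finset β} {r : β → ℝ} (hr : ∀ b ∈ T, r b ≤ 1) :
    ∑ s ∈ T.image fun b => dyadicCeil (r b), s ≤ 2 := by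
  let exponent (b : β) : ℕ := Nat.log 2 ⌊(r b)⁻¹⌋₊
  let N := T.sup exponent + 1
  have image_subset : T.image (fun b => dyadicCeil (r b)) ⊆
      insert 0 ((range N).image fun k => (1 / 2 : ℝ) ^ k) := by
    refine image_subset_iff.2 fun b hb => ?_
    rcases dyadicCeil_eq_zero_or_eq_pow (hr b hb) with h | h <;> rw [h]
    · exact mem_insert_self _ _
    · exact mem_insert_of_mem <| mem_image_of_mem _ <| mem_range.2 <|
        Nat.lt_succ_of_le (le_sup (f := exponent) hb)
  calc ∑ s ∈ T.image fun b => dyadicCeil (r b), s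
      ≤ ∑ s ∈ insert 0 ((range N).image fun k => (1 / 2 : ℝ) ^ k), s := by
        refine sum_le_sum_of_subset_of_nonneg image_subset fun s hs _ => ?_
        simp only [mem_insert, mem_image] at hs
        rcases hs with rfl | ⟨k, -, rfl⟩ <;> positivity
    _ = ∑ k ∈ range N, (1 / 2 : ℝ) ^ k := by
        rw [sum_insert_zero (f := fun s : ℝ => s) rfl, sum_image]
        exact (pow_right_injective₀ one_half_pos one_half_lt_one.ne).injOn
    _ ≤ 2 := sum_geometric_two_le N

end DyadicCeil

section Assignment

variable {ι β : Type*}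

lemma sum_le_sum_mul_add_sum_image {F T : Finset β} (hFT : F ⊆ T) {size x : β → ℝ}
    (hsize : ∀ b, 0 ≤ size b)
    (hcard : ∀ s, (#{b ∈ F | size b = s} : ℝ) ≤ ∑ b ∈ T with size b = s, x b + 1) :
    ∑ b ∈ F, size b ≤ ∑ b ∈ T, x b * size b + ∑ s ∈ T.image size, s := by
  have maps_to : ∀ b ∈ T, size b ∈ T.image size := fun b => mem_image_of_mem size
  calc ∑ b ∈ F, size b
      = ∑ s ∈ T.image size, ∑ b ∈ F with size b = s, size b :=
        (sum_fiberwise_of_maps_to (fun b hb => maps_to b (hFT hb)) _).symm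
    _ = ∑ s ∈ T.image size, #{b ∈ F | size b = s} * s := by
        refine sum_congr rfl fun s _ => ?_
        rw [sum_congr rfl fun b hb => (mem_filter.1 hb).2, sum_const, nsmul_eq_mul]
    _ ≤ ∑ s ∈ T.image size, (∑ b ∈ T with size b = s, x b + 1) * s := by
        refine sum_le_sum fun s hs => mul_le_mul_of_nonneg_right (hcard s) ?_
        obtain ⟨b, -, rfl⟩ := mem_image.1 hs
        exact hsize b
    _ = ∑ s ∈ T.image size, ∑ b ∈ T with size b = s, x b * size b + ∑ s ∈ T.image size, s := by
        rw [← sum_add_distrib]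
        refine sum_congr rfl fun s _ => ?_
        rw [add_one_mul, sum_mul]
        exact congrArg (· + s) (sum_congr rfl fun b hb => by rw [(mem_filter.1 hb).2])
    _ = ∑ b ∈ T, x b * size b + ∑ s ∈ T.image size, s := by
        rw [sum_fiberwise_of_maps_to maps_to]

variable [Fintype β] [DecidableEq ι]

lemma exists_assignment_sum_le_fractional [Fintype ι] {x : β → ι → ℝ}
    (hx : ∀ b, x b ∈ stdSimplex ℝ ι) {r : ι → β → ℝ} (hr : ∀ i b, 0 ≤ r i b)
    (hr1 : ∀ i b, x b i ≠ 0 → r i b ≤ 1) :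
    ∃ f : β → ι, ∀ i, ∑ b with f b = i, r i b ≤ 2 * ∑ b, x b i * r i b + 2 := by
  obtain ⟨f, hfx, hfcard⟩ := exists_forall_card_fiber_class_le hx fun i b => dyadicCeil (r i b)
  refine ⟨f, fun i => ?_⟩
  let T : Finset β := {b | x b i ≠ 0}
  have fiber_subset : ({b | f b = i} : Finset β) ⊆ T := fun b hb => by
    simpa [T, ← (mem_filter.1 hb).2] using hfx b
  have card_le (s : ℝ) : (#{b ∈ ({b | f b = i} : Finset β) | dyadicCeil (r i b) = s} : ℝ) ≤
      ∑ b ∈ T with dyadicCeil (r i b) = s, x b i + 1 := by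
    rw [filter_filter, filter_comm, sum_filter_ne_zero]
    exact hfcard i s
  calc ∑ b with f b = i, r i b
      ≤ ∑ b with f b = i, dyadicCeil (r i b) := sum_le_sum fun b _ => le_dyadicCeil _
    _ ≤ ∑ b ∈ T, x b i * dyadicCeil (r i b) + ∑ s ∈ T.image fun b => dyadicCeil (r i b), s :=
        sum_le_sum_mul_add_sum_image fiber_subset (fun b => dyadicCeil_nonneg _) card_le
    _ ≤ ∑ b, x b i * dyadicCeil (r i b) + 2 := by
        gcongr
        · exact fun b _ _ => mul_nonneg ((hx b).1 i) (dyadicCeil_nonneg _)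
        · exact subset_univ T
        · exact sum_image_dyadicCeil_le_two fun b hb => hr1 i b (mem_filter.1 hb).2
    _ ≤ ∑ b, x b i * (2 * r i b) + 2 := by
        gcongr with b
        · exact (hx b).1 i
        · exact dyadicCeil_le_two_mul (hr i b)
    _ = 2 * ∑ b, x b i * r i b + 2 := by
        rw [mul_sum]
        exact congrArg (· + 2) (sum_congr rfl fun b _ => by ring)

variable [Finite ι] [Nonempty ι] {w : ι → ℝ} {a : ι → β → ι}

lemma exists_assignment_sum_le_of_isPacking {c : ι → β → ℝ} (hw : ∀ i, 0 < w i)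
    (hc : ∀ i b, 0 ≤ c i b) (ha : ∀ i, IsPacking (c i) w (a i)) :
    ∃ f : β → ι, ∀ i, ∑ b with f b = i, c i b ≤ 18 * w i := by
  have := Fintype.ofFinite ι
  obtain ⟨x, hx, hxload⟩ := exists_fractionalLoad_le (P := fun i b => c i b ≤ w i)
    fun z hz => exists_assignment_price_le (fun j => (hw j).le) hc ha hz
  obtain ⟨f, hf⟩ := exists_assignment_sum_le_fractional (fun b => (hx b trivial).1)
    (r := fun i b => c i b / w i) (fun i b => div_nonneg (hc i b) (hw i).le)
    fun i b hxb => (div_le_one (hw i)).2 (by_contra fun h => hxb ((hx b trivial).2 i h))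
  refine ⟨f, fun i => ?_⟩
  have load_le : ∑ b, x b i * c i b ≤ 8 * w i := hxload i
  have rounded_le := hf i
  simp only [← mul_div_assoc, ← sum_div] at rounded_le
  rw [div_le_iff₀ (hw i), add_mul, div_mul_cancel₀ _ (hw i).ne'] at rounded_le
  linarith

lemma exists_assignment_sum_le_of_isPacking_smul {V : ι → β → ℝ} {t : ι → ℝ} (hw : ∀ i, 0 < w i)
    (hV : ∀ i b, 0 ≤ V i b) (ha : ∀ i, IsPacking (V i) (t i • w) (a i)) :
    ∃ f : β → ι, ∀ i, ∑ b with f b = i, V i b ≤ 18 * (t i * w i) := by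
  have ht (i : ι) : 0 ≤ t i :=
    nonneg_of_mul_nonneg_left ((sum_nonneg fun b _ => hV i b).trans (ha i i)) (hw i)
  have V_eq (i : ι) (b : β) : V i b = t i * (V i b / t i) := by
    refine (mul_div_cancel_of_imp' fun hti => ?_).symm
    have := (ha i).cost_le (hV i) b
    exact le_antisymm (by simpa [hti] using this) (hV i b)
  have packing (i : ι) : IsPacking (fun b => V i b / t i) w (a i) := fun j => by
    rw [← sum_div]
    exact div_le_of_le_mul₀ (ht i) (hw j).le ((ha i j).trans_eq (mul_comm _ _))
  obtain ⟨f, hf⟩ := exists_assignment_sum_le_of_isPacking hw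
    (fun i b => div_nonneg (hV i b) (ht i)) packing
  refine ⟨f, fun i => ?_⟩
  calc ∑ b with f b = i, V i b = t i * ∑ b with f b = i, V i b / t i := by
        rw [mul_sum, sum_congr rfl fun b _ => V_eq i b]
    _ ≤ t i * (18 * w i) := mul_le_mul_of_nonneg_left (hf i) (ht i)
    _ = 18 * (t i * w i) := by ring

end Assignment

section WMMS

variable {n m : ℕ}

lemma isPartition_fiber (f : Fin m → Fin n) : IsPartition fun i => ({b | f b = i} : Finset _) := by
  refine ⟨fun j k hjk => disjoint_left.2 fun b hj hk => hjk ?_, by ext; simp⟩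
  exact (mem_filter.1 hj).2.symm.trans (mem_filter.1 hk).2

lemma IsPartition.exists_eq_fiber {A : Fin n → Finset (Fin m)} (hA : IsPartition A) :
    ∃ a : Fin m → Fin n, ∀ j, A j = ({b | a b = j} : Finset _) := by
  have cover (b : Fin m) : ∃ j, b ∈ A j := by simpa using hA.2.ge (mem_univ b)
  choose a ha using cover
  refine ⟨a, fun j => Finset.ext fun b => ⟨fun hb => ?_, fun hb => ?_⟩⟩
  · by_contra hne
    exact disjoint_left.1 (hA.1 _ _ (by simpa using hne)) (ha b) hb
  · exact (mem_filter.1 hb).2 ▸ ha b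

variable (V : Fin n → Fin m → ℝ) (w : Fin n → ℝ)

lemma exists_isPartition_iSup_eq_WMMS (i : Fin n) :
    ∃ A : Fin n → Finset (Fin m), IsPartition A ∧
      WMMS V w i = ⨆ j, costOf V i (A j) * (w i / w j) := by
  refine Set.Nonempty.csInf_mem (s := {s | ∃ A : Fin n → Finset (Fin m), IsPartition A ∧
    s = ⨆ j, costOf V i (A j) * (w i / w j)}) ⟨_, _, isPartition_fiber fun _ => i, rfl⟩ ?_
  refine (Set.finite_range fun A : Fin n → Finset (Fin m) =>
    ⨆ j, costOf V i (A j) * (w i / w j)).subset ?_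
  rintro _ ⟨A, _, rfl⟩
  exact Set.mem_range_self A

variable {w}

lemma exists_isPacking_WMMS (hw : ∀ i, 0 < w i) (i : Fin n) :
    ∃ a : Fin m → Fin n, IsPacking (V i) ((WMMS V w i / w i) • w) a := by
  obtain ⟨A, hA, hWMMS⟩ := exists_isPartition_iSup_eq_WMMS V w i
  obtain ⟨a, ha⟩ := hA.exists_eq_fiber
  refine ⟨a, fun j => ?_⟩
  have : costOf V i (A j) * (w i / w j) ≤ WMMS V w i :=
    hWMMS ▸ le_ciSup (f := fun j => costOf V i (A j) * (w i / w j)) (Set.finite_range _).bddAbove j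
  rw [← le_div_iff₀ (div_pos (hw i) (hw j)), ha, div_div_eq_mul_div, mul_div_right_comm] at this
  exact this

variable {V}

lemma WMMS_nonneg (hV : ∀ i b, 0 ≤ V i b) (hw : ∀ i, 0 < w i) (i : Fin n) : 0 ≤ WMMS V w i := by
  refine Real.sInf_nonneg ?_
  rintro _ ⟨A, _, rfl⟩
  exact Real.iSup_nonneg fun j =>
    mul_nonneg (sum_nonneg fun b _ => hV i b) (div_pos (hw i) (hw j)).le

theorem exists_twenty_WMMS_assignment_general (hn : n ≠ 0) (hV : ∀ i b, 0 ≤ V i b)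
    (hw : ∀ i, 0 < w i) :
    ∃ S : Fin n → Finset (Fin m), IsPartition S ∧
      ∀ i, costOf V i (S i) ≤ 18 * WMMS V w i := by
  have : NeZero n := ⟨hn⟩
  choose a ha using exists_isPacking_WMMS V hw
  obtain ⟨f, hf⟩ := exists_assignment_sum_le_of_isPacking_smul hw hV ha
  refine ⟨fun i => {b | f b = i}, isPartition_fiber f, fun i => ?_⟩
  simpa only [costOf, div_mul_cancel₀ _ (hw i).ne'] using hf i

end WMMS

/-- every instance of the asymmetric chore division problem admits a
20-WMMS assignment. -/
theorem exists_twenty_WMMS_assignment (n m : ℕ) (V : Fin n → Fin m → ℝ)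
    (w : Fin n → ℝ) (hV : ∀ i b, 0 ≤ V i b) (hw : ∀ i, 0 < w i)
    (hw1 : ∀ i, w i ≤ 1) (hsum : ∑ i, w i = 1) :
    ∃ S : Fin n → Finset (Fin m), IsPartition S ∧
      ∀ i, costOf V i (S i) ≤ 20 * WMMS V w i := by
  obtain ⟨S, hS, hcost⟩ :=
    exists_twenty_WMMS_assignment_general (by rintro rfl; simp at hsum) hV hw
  exact ⟨S, hS, fun i => (hcost i).trans (by linarith [WMMS_nonneg hV hw i])⟩
end

section
/- Fix n, m, an entitlement vector w, and α ≥ 1. Call an instance sorted if, under a common indexing b_1,…,b_m of the chores, V_i({b_1}) ≤ V_i({b_2}) ≤ … ≤ V_i({b_m}) holds for every agent i. If every sorted instance with n agents, m chores, and entitlements w admits an α-WMMS assignment, then every instance with n agents, m chores, and entitlements w admits an α-WMMS assignment. -/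
open Finset

/-!
Let each agent relabel the chores so that her own costs increase. Relabelling changes no WMMS value,
so only assignments have to be transported back to the original instance. Given a partition of the
sorted instance, the owner of position `b` is to receive, in its place, one of the `b + 1` chores
that are cheapest to her. A set of positions with maximum `b` has at most `b + 1` elements, and
position `b` alone already admits `b + 1` chores, so Hall's condition holds and all positions can be
served by distinct chores.
-/

theorem exists_perm_symm_apply_le {ι : Type*} [LinearOrder ι] [LocallyFiniteOrderBot ι] [Finite ι]
    (σ : ι → Equiv.Perm ι) : ∃ τ : Equiv.Perm ι, ∀ b, (σ b).symm (τ b) ≤ b := by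
  let admissible (b : ι) : Finset ι := (Iic b).map (σ b).toEmbedding
  have hall (J : Finset ι) : #J ≤ #(J.biUnion admissible) := by
    rcases J.eq_empty_or_nonempty with rfl | hJ
    · simp
    · calc #J ≤ #(Iic (J.max' hJ)) := card_le_card fun b hb => mem_Iic.2 (J.le_max' b hb)
        _ = #(admissible (J.max' hJ)) := (card_map _).symm
        _ ≤ #(J.biUnion admissible) :=
          card_le_card (subset_biUnion_of_mem admissible (J.max'_mem hJ))
  obtain ⟨g, g_injective, g_mem⟩ :=
    (all_card_le_biUnion_card_iff_exists_injective admissible).1 hall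
  refine ⟨Equiv.ofBijective g (Finite.injective_iff_bijective.1 g_injective), fun b => ?_⟩
  exact mem_Iic.1 (mem_map_equiv.1 (g_mem b))

section SortedInstance

variable {n m : ℕ}

theorem isPartition_iff_existsUnique_mem {A : Fin n → Finset (Fin m)} :
    IsPartition A ↔ ∀ b, ∃! i, b ∈ A i := by
  constructor
  · rintro ⟨disjoint, cover⟩ b
    obtain ⟨i, -, hi⟩ := mem_biUnion.1 (cover ▸ mem_univ b)
    exact ⟨i, hi, fun j hj => by_contra fun hne => disjoint_left.1 (disjoint j i hne) hj hi⟩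
  · intro h
    refine ⟨fun j k hjk => disjoint_left.2 fun b hj hk => hjk ((h b).unique hj hk), ?_⟩
    refine eq_univ_iff_forall.2 fun b => ?_
    obtain ⟨i, hi⟩ := (h b).exists
    exact mem_biUnion.2 ⟨i, mem_univ i, hi⟩

theorem isPartition_map_perm_iff {A : Fin n → Finset (Fin m)} (τ : Equiv.Perm (Fin m)) :
    IsPartition (fun j => (A j).map τ.toEmbedding) ↔ IsPartition A := by
  simp only [isPartition_iff_existsUnique_mem, mem_map_equiv]
  exact τ.symm.forall_congr_left.trans (by simp)

theorem costOf_map_perm (V : Fin n → Fin m → ℝ) (i : Fin n) (S : Finset (Fin m))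
    (τ : Equiv.Perm (Fin m)) : costOf V i (S.map τ.toEmbedding) = ∑ b ∈ S, V i (τ b) :=
  sum_map S τ.toEmbedding (V i)

theorem WMMS_comp_perm (V : Fin n → Fin m → ℝ) (w : Fin n → ℝ) (σ : Fin n → Equiv.Perm (Fin m))
    (i : Fin n) : WMMS (fun k => V k ∘ σ k) w i = WMMS V w i := by
  unfold WMMS
  congr 1 with x
  refine (Equiv.piCongrRight fun _ => (σ i).finsetCongr).exists_congr fun A => ?_
  refine and_congr (isPartition_map_perm_iff (σ i)).symm ?_
  have cost_eq (j : Fin n) :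
      costOf (fun k => V k ∘ σ k) i (A j) = costOf V i ((A j).map (σ i).toEmbedding) :=
    (costOf_map_perm V i (A j) (σ i)).symm
  simp [cost_eq]

/-- The sorted instance associated with `V`: `sortedCosts V i b` is the `b`-th smallest cost of
agent `i`, counted from `0` and with multiplicity. Each agent uses her own relabelling of the
chores. -/
noncomputable def sortedCosts (V : Fin n → Fin m → ℝ) : Fin n → Fin m → ℝ :=
  fun i => V i ∘ Tuple.sort (V i)

theorem WMMS_sortedCosts (V : Fin n → Fin m → ℝ) (w : Fin n → ℝ) (i : Fin n) :
    WMMS (sortedCosts V) w i = WMMS V w i :=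
  WMMS_comp_perm V w (fun k => Tuple.sort (V k)) i

theorem sortedCosts_monotone (V : Fin n → Fin m → ℝ) (i : Fin n) : Monotone (sortedCosts V i) :=
  Tuple.monotone_sort (V i)

theorem exists_isPartition_costOf_le_sortedCosts (V : Fin n → Fin m → ℝ)
    {S : Fin n → Finset (Fin m)} (hS : IsPartition S) :
    ∃ T : Fin n → Finset (Fin m), IsPartition T ∧
      ∀ i, costOf V i (T i) ≤ costOf (sortedCosts V) i (S i) := by
  choose owner _ owner_unique using isPartition_iff_existsUnique_mem.1 hS
  obtain ⟨τ, hτ⟩ := exists_perm_symm_apply_le fun b => Tuple.sort (V (owner b))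
  refine ⟨_, (isPartition_map_perm_iff τ).2 hS, fun i => ?_⟩
  rw [costOf_map_perm]
  refine sum_le_sum fun b hb => ?_
  obtain rfl : i = owner b := owner_unique b i hb
  simpa [sortedCosts] using sortedCosts_monotone V (owner b) (hτ b)

theorem alpha_WMMS_of_sorted_general (V : Fin n → Fin m → ℝ) (w : Fin n → ℝ) (α : ℝ)
    (hsorted : ∃ S : Fin n → Finset (Fin m), IsPartition S ∧
      ∀ i, costOf (sortedCosts V) i (S i) ≤ α * WMMS (sortedCosts V) w i) :
    ∃ S : Fin n → Finset (Fin m), IsPartition S ∧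
      ∀ i, costOf V i (S i) ≤ α * WMMS V w i := by
  obtain ⟨S, hS, cost_le⟩ := hsorted
  obtain ⟨T, hT, costOf_T_le⟩ := exists_isPartition_costOf_le_sortedCosts V hS
  refine ⟨T, hT, fun i => ?_⟩
  calc costOf V i (T i) ≤ costOf (sortedCosts V) i (S i) := costOf_T_le i
    _ ≤ α * WMMS (sortedCosts V) w i := cost_le i
    _ = α * WMMS V w i := by rw [WMMS_sortedCosts]

end SortedInstance

/-- if every sorted instance (with `n` agents, `m` chores,
entitlements `w`) admits an `α`-WMMS assignment, then every instance with these
parameters admits an `α`-WMMS assignment. -/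
theorem alpha_WMMS_of_sorted (n m : ℕ) (w : Fin n → ℝ) (α : ℝ) (hα : 1 ≤ α)
    (hw : ∀ i, 0 < w i) (hw1 : ∀ i, w i ≤ 1) (hsum : ∑ i, w i = 1)
    (hsorted : ∀ V : Fin n → Fin m → ℝ, (∀ i b, 0 ≤ V i b) →
      (∀ i, Monotone (V i)) →
      ∃ S : Fin n → Finset (Fin m), IsPartition S ∧
        ∀ i, costOf V i (S i) ≤ α * WMMS V w i) :
    ∀ V : Fin n → Fin m → ℝ, (∀ i b, 0 ≤ V i b) →
      ∃ S : Fin n → Finset (Fin m), IsPartition S ∧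
        ∀ i, costOf V i (S i) ≤ α * WMMS V w i := by
  intro V hV
  exact alpha_WMMS_of_sorted_general V w α
    (hsorted (sortedCosts V) (fun i _ => hV i _) (sortedCosts_monotone V))
end

section
/- Let α ≥ 1. Suppose that every entitlement-divisible instance of the asymmetric chore division problem (i.e., every instance in which max{w'_i/w'_j, w'_j/w'_i} is an integer for every pair of agents i, j) admits an α-WMMS assignment. Then every instance of the asymmetric chore division problem admits a 2α-WMMS assignment. -/
open Finset

/-!
Round every entitlement down to a power of two and rescale the results to sum to one. All ratios
become powers of two, so the new instance is entitlement-divisible, and each ratio `w i / w j` grows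
by a factor of less than two. A weighted maximin share depends on the entitlements only through
these ratios and does so monotonically, so it grows by a factor of at most two as well.
-/

section WMMS

variable {n m : ℕ} {V : Fin n → Fin m → ℝ} {w w' : Fin n → ℝ} {i : Fin n}

theorem costOf_nonneg (hV : ∀ b, 0 ≤ V i b) (S : Finset (Fin m)) : 0 ≤ costOf V i S :=
  sum_nonneg fun b _ => hV b

theorem isPartition_single (i : Fin n) :
    IsPartition (fun j => if j = i then (univ : Finset (Fin m)) else ∅) := by
  refine ⟨fun j k hjk => ?_, ?_⟩
  · by_cases hj : j = i
    · have hk : k ≠ i := fun hk => hjk (hj.trans hk.symm)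
      simp [hk]
    · simp [hj]
  · exact eq_univ_of_forall fun b => mem_biUnion.2 ⟨i, mem_univ i, by simp⟩

theorem finite_setOf_isPartition_iSup (V : Fin n → Fin m → ℝ) (w : Fin n → ℝ) (i : Fin n) :
    {x | ∃ A : Fin n → Finset (Fin m), IsPartition A ∧
      x = ⨆ j, costOf V i (A j) * (w i / w j)}.Finite := by
  refine (Set.finite_range fun A : Fin n → Finset (Fin m) =>
    ⨆ j, costOf V i (A j) * (w i / w j)).subset ?_
  rintro _ ⟨A, -, rfl⟩
  exact ⟨A, rfl⟩

theorem WMMS_le_iSup {A : Fin n → Finset (Fin m)} (hA : IsPartition A) :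
    WMMS V w i ≤ ⨆ j, costOf V i (A j) * (w i / w j) :=
  csInf_le (finite_setOf_isPartition_iSup V w i).bddBelow ⟨A, hA, rfl⟩

theorem exists_isPartition_WMMS_eq_iSup (V : Fin n → Fin m → ℝ) (w : Fin n → ℝ) (i : Fin n) :
    ∃ A : Fin n → Finset (Fin m), IsPartition A ∧
      WMMS V w i = ⨆ j, costOf V i (A j) * (w i / w j) :=
  Set.Nonempty.csInf_mem (s := {x | ∃ A, IsPartition A ∧ x = ⨆ j, costOf V i (A j) * (w i / w j)})
    ⟨_, _, isPartition_single i, rfl⟩ (finite_setOf_isPartition_iSup V w i)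

theorem WMMS_le_mul_WMMS {c : ℝ} (hV : ∀ b, 0 ≤ V i b) (hc : 0 ≤ c)
    (hratio : ∀ j, w' i / w' j ≤ c * (w i / w j)) : WMMS V w' i ≤ c * WMMS V w i := by
  obtain ⟨A, hA, hWMMS⟩ := exists_isPartition_WMMS_eq_iSup V w i
  have : Nonempty (Fin n) := ⟨i⟩
  refine (WMMS_le_iSup hA).trans (ciSup_le fun j => ?_)
  calc costOf V i (A j) * (w' i / w' j)
      ≤ costOf V i (A j) * (c * (w i / w j)) :=
        mul_le_mul_of_nonneg_left (hratio j) (costOf_nonneg hV _)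
    _ = c * (costOf V i (A j) * (w i / w j)) := mul_left_comm _ _ _
    _ ≤ c * WMMS V w i := by
        rw [hWMMS]
        exact mul_le_mul_of_nonneg_left
          (le_ciSup (f := fun j => costOf V i (A j) * (w i / w j))
            (Set.finite_range _).bddAbove j) hc

end WMMS

theorem max_zpow_zpow_neg {G₀ : Type*} [GroupWithZero G₀] [LinearOrder G₀] [ZeroLEOneClass G₀]
    [PosMulReflectLT G₀] {b : G₀} (hb : 1 ≤ b) (k : ℤ) :
    max (b ^ k) (b ^ (-k)) = b ^ k.natAbs :=
  calc max (b ^ k) (b ^ (-k))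
      = b ^ |k| := ((zpow_right_mono₀ hb).map_max (a := k) (b := -k)).symm
    _ = b ^ k.natAbs := by rw [Int.abs_eq_natAbs, zpow_natCast]

section Entitlements

variable {ι : Type*}

/-- Entitlement-divisibility: of any two entitlements, the larger is an integer multiple of the
smaller. -/
def EntitlementDivisible (w : ι → ℝ) : Prop :=
  ∀ i j, ∃ k : ℤ, max (w i / w j) (w j / w i) = (k : ℝ)

variable [Fintype ι]

/-- The entitlements `w`, each rounded down to an integer power of `b` and then rescaled to sum to
one. A nonpositive `w i` is sent to a multiple of `b ^ 0`, since `Int.log` is zero there. -/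
noncomputable def powRound (b : ℕ) (w : ι → ℝ) (i : ι) : ℝ :=
  (b : ℝ) ^ Int.log b (w i) / ∑ j, (b : ℝ) ^ Int.log b (w j)

variable {b : ℕ} {w : ι → ℝ}

theorem sum_zpow_log_pos [Nonempty ι] (hb : 0 < b) (w : ι → ℝ) :
    0 < ∑ j, (b : ℝ) ^ Int.log b (w j) :=
  sum_pos (fun _ _ => zpow_pos (Nat.cast_pos.2 hb) _) univ_nonempty

theorem powRound_pos (hb : 0 < b) (w : ι → ℝ) (i : ι) : 0 < powRound b w i :=
  have : Nonempty ι := ⟨i⟩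
  div_pos (zpow_pos (Nat.cast_pos.2 hb) _) (sum_zpow_log_pos hb w)

theorem sum_powRound [Nonempty ι] (hb : 0 < b) (w : ι → ℝ) : ∑ i, powRound b w i = 1 := by
  simp only [powRound, ← sum_div]
  exact div_self (sum_zpow_log_pos hb w).ne'

theorem powRound_le_one (hb : 0 < b) (w : ι → ℝ) (i : ι) : powRound b w i ≤ 1 :=
  have : Nonempty ι := ⟨i⟩
  (single_le_sum (fun j _ => (powRound_pos hb w j).le) (mem_univ i)).trans_eq (sum_powRound hb w)

theorem powRound_div_powRound (hb : 0 < b) (w : ι → ℝ) (i j : ι) :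
    powRound b w i / powRound b w j = (b : ℝ) ^ (Int.log b (w i) - Int.log b (w j)) := by
  have : Nonempty ι := ⟨i⟩
  rw [powRound, powRound, div_div_div_cancel_right₀ (sum_zpow_log_pos hb w).ne',
    zpow_sub₀ (Nat.cast_pos.2 hb).ne']

theorem entitlementDivisible_powRound (hb : 0 < b) (w : ι → ℝ) :
    EntitlementDivisible (powRound b w) := by
  intro i j
  refine ⟨(b : ℤ) ^ (Int.log b (w i) - Int.log b (w j)).natAbs, ?_⟩
  rw [powRound_div_powRound hb, powRound_div_powRound hb, ← neg_sub (Int.log b (w i)),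
    max_zpow_zpow_neg (Nat.one_le_cast.2 hb), Int.cast_pow, Int.cast_natCast]

theorem powRound_div_powRound_le {i j : ι} (hb : 1 < b) (hi : 0 < w i) (hj : 0 < w j) :
    powRound b w i / powRound b w j ≤ b * (w i / w j) := by
  have hb₀ : (0 : ℝ) < b := Nat.cast_pos.2 (zero_lt_one.trans hb)
  have hi_log : (b : ℝ) ^ Int.log b (w i) ≤ w i := Int.zpow_log_le_self hb hi
  have hj_log : w j / b ≤ (b : ℝ) ^ Int.log b (w j) := by
    rw [div_le_iff₀ hb₀, ← zpow_add_one₀ hb₀.ne']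
    exact (Int.lt_zpow_succ_log_self hb (w j)).le
  calc powRound b w i / powRound b w j
      = (b : ℝ) ^ Int.log b (w i) / (b : ℝ) ^ Int.log b (w j) := by
        rw [powRound_div_powRound (zero_lt_one.trans hb), zpow_sub₀ hb₀.ne']
    _ ≤ w i / (w j / b) := div_le_div₀ hi.le hi_log (div_pos hj hb₀) hj_log
    _ = b * (w i / w j) := by rw [div_div_eq_mul_div, mul_comm, mul_div_assoc]

end Entitlements

theorem WMMS_powRound_le {n m b : ℕ} {V : Fin n → Fin m → ℝ} {w : Fin n → ℝ} {i : Fin n}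
    (hb : 1 < b) (hV : ∀ c, 0 ≤ V i c) (hw : ∀ j, 0 < w j) :
    WMMS V (powRound b w) i ≤ b * WMMS V w i :=
  WMMS_le_mul_WMMS hV b.cast_nonneg fun j => powRound_div_powRound_le hb (hw i) (hw j)

/-- if every entitlement-divisible instance admits an `α`-WMMS
assignment, then every instance admits a `2α`-WMMS assignment. -/
theorem two_alpha_WMMS_of_entitlementDivisible (α : ℝ) (hα : 1 ≤ α)
    (hdiv : ∀ (n m : ℕ) (V : Fin n → Fin m → ℝ) (w : Fin n → ℝ),
      (∀ i b, 0 ≤ V i b) → (∀ i, 0 < w i) → (∀ i, w i ≤ 1) → (∑ i, w i = 1) →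
      (∀ i j, ∃ k : ℤ, max (w i / w j) (w j / w i) = (k : ℝ)) →
      ∃ S : Fin n → Finset (Fin m), IsPartition S ∧
        ∀ i, costOf V i (S i) ≤ α * WMMS V w i) :
    ∀ (n m : ℕ) (V : Fin n → Fin m → ℝ) (w : Fin n → ℝ),
      (∀ i b, 0 ≤ V i b) → (∀ i, 0 < w i) → (∀ i, w i ≤ 1) → (∑ i, w i = 1) →
      ∃ S : Fin n → Finset (Fin m), IsPartition S ∧
        ∀ i, costOf V i (S i) ≤ 2 * α * WMMS V w i := by
  intro n m V w hV hw _ hsum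
  have : Nonempty (Fin n) :=
    univ_nonempty_iff.1 (nonempty_of_sum_ne_zero (hsum.trans_ne one_ne_zero))
  obtain ⟨S, hS, hcost⟩ := hdiv n m V (powRound 2 w) hV (powRound_pos two_pos w)
    (powRound_le_one two_pos w) (sum_powRound two_pos w) (entitlementDivisible_powRound two_pos w)
  refine ⟨S, hS, fun i => ?_⟩
  calc costOf V i (S i)
      ≤ α * WMMS V (powRound 2 w) i := hcost i
    _ ≤ α * (2 * WMMS V w i) :=
        mul_le_mul_of_nonneg_left (WMMS_powRound_le one_lt_two (hV i) hw) (zero_le_one.trans hα)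
    _ = 2 * α * WMMS V w i := by ring
end

section
/- In any instance of the asymmetric chore division problem, the assignment that gives the entire set of chores to an agent with maximum entitlement and nothing to all other agents is a (1/max_{j} w_j)-WMMS assignment. In particular, every instance admits a (1/max_{j} w_j)-WMMS assignment. -/
open Finset

/-!
Fix an agent `i` and a partition `A`. The weighted average, with weights `w j`, of the ratios
`V_i(A_j) * (w i / w j)` is `w i * V_i(all chores) / ∑ j, w j`, and it is at most their maximum.
Minimising over `A` gives `w i * V_i(all chores) ≤ (∑ j, w j) * WMMS_i`. So any agent `i₀` can take
everything at a cost of at most `(∑ j, w j) / w i₀` times its share, and this factor is smallest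
when `w i₀` is largest.
-/

/-- The `α`-WMMS assignments: partitions giving each agent `i` a bundle of cost at most `α` times
its weighted maximin share. -/
def IsApproxWMMS {n m : ℕ} (V : Fin n → Fin m → ℝ) (w : Fin n → ℝ) (α : ℝ)
    (S : Fin n → Finset (Fin m)) : Prop :=
  IsPartition S ∧ ∀ i, costOf V i (S i) ≤ α * WMMS V w i

/-- The assignment giving every chore to agent `i₀` and nothing to the others. -/
def allTo {n m : ℕ} (i₀ : Fin n) : Fin n → Finset (Fin m) :=
  fun j => if j = i₀ then univ else ∅

section

variable {n m : ℕ} {V : Fin n → Fin m → ℝ} {w : Fin n → ℝ}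

theorem isPartition_allTo (i₀ : Fin n) : IsPartition (allTo (m := m) i₀) := by
  refine ⟨fun j k hjk => ?_, eq_univ_of_forall fun b => ?_⟩
  · by_cases hj : j = i₀
    · have hk : k ≠ i₀ := fun hk => hjk (hj.trans hk.symm)
      simp [allTo, hk]
    · simp [allTo, hj]
  · exact mem_biUnion.2 ⟨i₀, mem_univ i₀, by simp [allTo]⟩

theorem IsPartition.sum_costOf {A : Fin n → Finset (Fin m)} (hA : IsPartition A)
    (V : Fin n → Fin m → ℝ) (i : Fin n) : ∑ j, costOf V i (A j) = costOf V i univ := by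
  unfold costOf
  rw [← hA.2, sum_biUnion fun j _ k _ hjk => hA.1 j k hjk]

theorem IsPartition.mul_costOf_univ_le_sum_mul_iSup {A : Fin n → Finset (Fin m)}
    (hA : IsPartition A) (V : Fin n → Fin m → ℝ) (hw : ∀ j, 0 < w j) (i : Fin n) :
    w i * costOf V i univ ≤ (∑ j, w j) * ⨆ j, costOf V i (A j) * (w i / w j) := by
  have ratio_le_iSup (j : Fin n) :
      costOf V i (A j) * (w i / w j) ≤ ⨆ k, costOf V i (A k) * (w i / w k) :=
    le_ciSup (f := fun k => costOf V i (A k) * (w i / w k)) (Set.finite_range _).bddAbove j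
  calc w i * costOf V i univ
      = ∑ j, w i * costOf V i (A j) := by rw [← hA.sum_costOf, mul_sum]
    _ = ∑ j, w j * (costOf V i (A j) * (w i / w j)) :=
        sum_congr rfl fun j _ => by field_simp [(hw j).ne']
    _ ≤ ∑ j, w j * ⨆ k, costOf V i (A k) * (w i / w k) :=
        sum_le_sum fun j _ => mul_le_mul_of_nonneg_left (ratio_le_iSup j) (hw j).le
    _ = (∑ j, w j) * ⨆ k, costOf V i (A k) * (w i / w k) := (sum_mul ..).symm

theorem mul_costOf_univ_le_sum_mul_WMMS (V : Fin n → Fin m → ℝ) (hw : ∀ j, 0 < w j)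
    (i : Fin n) : w i * costOf V i univ ≤ (∑ j, w j) * WMMS V w i := by
  have total_pos : 0 < ∑ j, w j := Finset.sum_pos (fun j _ => hw j) ⟨i, mem_univ i⟩
  rw [← div_le_iff₀' total_pos]
  refine le_csInf ⟨_, allTo i, isPartition_allTo i, rfl⟩ ?_
  rintro _ ⟨A, hA, rfl⟩
  rw [div_le_iff₀' total_pos]
  exact hA.mul_costOf_univ_le_sum_mul_iSup V hw i

theorem isApproxWMMS_allTo (hV : ∀ i, 0 ≤ costOf V i univ) (hw : ∀ j, 0 < w j) (i₀ : Fin n) :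
    IsApproxWMMS V w ((∑ j, w j) / w i₀) (allTo i₀) := by
  refine ⟨isPartition_allTo i₀, fun i => ?_⟩
  rw [div_mul_eq_mul_div, le_div_iff₀' (hw i₀)]
  have share_bound := mul_costOf_univ_le_sum_mul_WMMS V hw i
  rcases eq_or_ne i i₀ with rfl | hi
  · simpa only [allTo, if_true] using share_bound
  · have share_nonneg : 0 ≤ (∑ j, w j) * WMMS V w i :=
      (mul_nonneg (hw i).le (hV i)).trans share_bound
    simpa [allTo, hi, costOf] using share_nonneg

theorem all_to_max_entitlement_WMMS_general [NeZero n] (hV : ∀ i, 0 ≤ costOf V i univ)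
    (hw : ∀ j, 0 < w j) :
    (∀ i₀, (∀ j, w j ≤ w i₀) → IsApproxWMMS V w ((∑ j, w j) / ⨆ j, w j) (allTo i₀)) ∧
      ∃ S, IsApproxWMMS V w ((∑ j, w j) / ⨆ j, w j) S := by
  have allTo_max (i₀ : Fin n) (hmax : ∀ j, w j ≤ w i₀) :
      IsApproxWMMS V w ((∑ j, w j) / ⨆ j, w j) (allTo i₀) := by
    have iSup_eq : ⨆ j, w j = w i₀ :=
      le_antisymm (ciSup_le hmax) (le_ciSup (Set.finite_range w).bddAbove i₀)
    rw [iSup_eq]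
    exact isApproxWMMS_allTo hV hw i₀
  obtain ⟨i₀, hmax⟩ := Finite.exists_max w
  exact ⟨allTo_max, allTo i₀, allTo_max i₀ hmax⟩

end

/-- giving all chores to an agent of maximum entitlement (and nothing
to the others) is a `(1 / max_j w_j)`-WMMS assignment; in particular such an
assignment always exists. -/
theorem all_to_max_entitlement_WMMS (n m : ℕ) (V : Fin n → Fin m → ℝ)
    (w : Fin n → ℝ) (hV : ∀ i b, 0 ≤ V i b) (hw : ∀ i, 0 < w i)
    (hw1 : ∀ i, w i ≤ 1) (hsum : ∑ i, w i = 1) :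
    (∀ i0 : Fin n, (∀ j, w j ≤ w i0) →
      IsPartition (fun j => if j = i0 then (Finset.univ : Finset (Fin m)) else ∅) ∧
      ∀ i, costOf V i (if i = i0 then (Finset.univ : Finset (Fin m)) else ∅) ≤
        (1 / ⨆ j, w j) * WMMS V w i) ∧
    ∃ S : Fin n → Finset (Fin m), IsPartition S ∧
      ∀ i, costOf V i (S i) ≤ (1 / ⨆ j, w j) * WMMS V w i := by
  have : NeZero n := ⟨by rintro rfl; simp at hsum⟩
  exact hsum ▸ all_to_max_entitlement_WMMS_general (fun i => sum_nonneg fun b _ => hV i b) hw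
end

section
/- Let k = (√3+1)/2 and c = (13k + √(169k² + 780k))/26, i.e., the positive root of 13x² − 13kx − 15k = 0. Then for all real numbers w_1, w_2, w_3 with 0 < w_1 ≤ w_2 ≤ w_3 and w_1 + w_2 + w_3 = 1, we have min( (w_1 + w_3)·k/w_3 , 15·w_3/(13·w_1) ) ≤ c. -/
/-!
With `t = w₁ / w₃`, the first term `(1 + t) k` increases in `t` and the second term `15 / (13 t)`
decreases. The second equals `c` at `t = 15 / (13 c)`, and there the first also equals `c`, because
this is the equation `13 c² = 13 k c + 15 k`. So the first term is at most `c` to the left of this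
point and the second is at most `c` to the right of it.
-/

theorem min_add_mul_div_le_of_mul_add_le_mul_sq {K : Type*} [Field K] [LinearOrder K]
    [IsStrictOrderedRing K] {k a b c x y : K} (hk : 0 ≤ k) (hb : 0 < b) (hc : 0 < c)
    (hx : 0 < x) (hy : 0 < y) (hquad : k * (b * c + a) ≤ b * c ^ 2) :
    min ((x + y) * k / y) (a * y / (b * x)) ≤ c := by
  rw [min_le_iff, div_le_iff₀ hy, div_le_iff₀ (mul_pos hb hx)]
  rcases le_total (c * (b * x)) (a * y) with hleft | hright
  · left
    refine le_of_mul_le_mul_left ?_ (mul_pos hb hc)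
    calc b * c * ((x + y) * k) = k * (c * (b * x) + b * c * y) := by ring
      _ ≤ k * (a * y + b * c * y) := by gcongr
      _ = k * (b * c + a) * y := by ring
      _ ≤ b * c ^ 2 * y := by gcongr
      _ = b * c * (c * y) := by ring
  · exact Or.inr hright

theorem quadratic_eq_zero_of_eq_neg_add_sqrt_discrim {a b c x : ℝ} (ha : a ≠ 0)
    (hdiscrim : 0 ≤ discrim a b c) (hx : x = (-b + √(discrim a b c)) / (2 * a)) :
    a * (x * x) + b * x + c = 0 :=
  (quadratic_eq_zero_iff ha (Real.mul_self_sqrt hdiscrim).symm x).2 (Or.inl hx)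

theorem three_agent_arith_general {k a b c x y : ℝ} (hk : 0 < k) (ha : 0 ≤ a) (hb : 0 < b)
    (hc : c = (b * k + √(b ^ 2 * k ^ 2 + 4 * a * b * k)) / (2 * b)) (hx : 0 < x) (hy : 0 < y) :
    min ((x + y) * k / y) (a * y / (b * x)) ≤ c := by
  have hc_pos : 0 < c := by rw [hc]; positivity
  have hdiscrim : discrim b (-(b * k)) (-(a * k)) = b ^ 2 * k ^ 2 + 4 * a * b * k := by
    rw [discrim]; ring
  have hroot : b * (c * c) + -(b * k) * c + -(a * k) = 0 := by
    apply quadratic_eq_zero_of_eq_neg_add_sqrt_discrim hb.ne'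
    · rw [hdiscrim]; positivity
    · rw [hdiscrim, neg_neg, hc]
  exact min_add_mul_div_le_of_mul_add_le_mul_sq hk.le hb hc_pos hx hy (by linarith)

/-- with `k = (√3+1)/2` and `c` the positive root of
`13x² − 13kx − 15k = 0`, for all `0 < w₁ ≤ w₂ ≤ w₃` with `w₁ + w₂ + w₃ = 1` we
have `min((w₁+w₃)·k/w₃, 15·w₃/(13·w₁)) ≤ c`. -/
theorem three_agent_arith (k c : ℝ)
    (hk : k = (Real.sqrt 3 + 1) / 2)
    (hc : c = (13 * k + Real.sqrt (169 * k ^ 2 + 780 * k)) / 26) :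
    ∀ w1 w2 w3 : ℝ, 0 < w1 → w1 ≤ w2 → w2 ≤ w3 → w1 + w2 + w3 = 1 →
      min ((w1 + w3) * k / w3) (15 * w3 / (13 * w1)) ≤ c := fun _ _ _ h1 h12 h23 _ ↦
  three_agent_arith_general (by rw [hk]; positivity) (by norm_num) (by norm_num)
    (by rw [hc]; norm_num) h1 (h1.trans_le (h12.trans h23))
end

section
/- Let k = (√3+1)/2 and let c > k satisfy 1/c + 20/(17c²) + 40/(17c²·(2c/(√3+1) − 1)) = 1. Then for all real numbers w_1, w_2, w_3, w_4 with 0 < w_1 ≤ w_2 ≤ w_3 ≤ w_4, w_1 + w_2 + w_3 + w_4 = 1, and w_1/w_3 ≥ w_2/w_4, we have min( 1/w_4 , ((w_1 + w_3)/w_3)·k , (20/17)·(w_4/w_1) ) ≤ c. -/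
/-!
If all three terms of the minimum exceeded `c`, each would bound a weight: the first gives
`w₄ < 1 / c`, the third then gives `w₁ < a / c²` with `a = 20 / 17`, and the second gives
`(c / k - 1) * w₃ < w₁`, which bounds `w₃` and hence `w₂ ≤ w₃`. The equation defining `c` says that
these bounds add up to `1`, so the weights would sum to less than `1`.
-/

section

variable {F : Type*} [Field F] [LinearOrder F] [IsStrictOrderedRing F]

lemma div_sub_one_mul_lt_of_lt_add_div_mul {c k x y : F} (hk : 0 < k) (hy : 0 < y)
    (h : c < (x + y) / y * k) : (c / k - 1) * y < x := by
  have hdiv : c / k < (x + y) / y := (div_lt_iff₀ hk).2 h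
  have hmul : c / k * y < x + y := (lt_div_iff₀ hy).1 hdiv
  linarith

lemma lt_div_sq_of_lt_mul_div {a c x y : F} (hc : 0 < c) (hx : 0 < x) (hy : 0 < y)
    (hyc : y < 1 / c) (h : c < a * (y / x)) : x < a / c ^ 2 := by
  have ha : 0 < a := pos_of_mul_pos_left (hc.trans h) (div_pos hy hx).le
  have hcx : c * x < a * y := by rwa [← mul_div_assoc, lt_div_iff₀ hx] at h
  calc
    x < a * y / c := by rwa [lt_div_iff₀' hc]
    _ < a * (1 / c) / c := by gcongr
    _ = a / c ^ 2 := by field_simp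

lemma sum_lt_of_lt_min {a c k w1 w2 w3 w4 : F} (hk : 0 < k) (hck : k < c)
    (hw1 : 0 < w1) (hw3 : 0 < w3) (hw4 : 0 < w4) (hw23 : w2 ≤ w3)
    (h : c < min (min (1 / w4) ((w1 + w3) / w3 * k)) (a * (w4 / w1))) :
    w1 + w2 + w3 + w4 < 1 / c + a / c ^ 2 + 2 * a / (c ^ 2 * (c / k - 1)) := by
  obtain ⟨⟨h4, h3⟩, h1⟩ : (c < 1 / w4 ∧ c < (w1 + w3) / w3 * k) ∧ c < a * (w4 / w1) := by
    simpa only [lt_min_iff] using h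
  have hc : 0 < c := hk.trans hck
  have hpos : 0 < c / k - 1 := sub_pos.2 ((one_lt_div hk).2 hck)
  have hw4_lt : w4 < 1 / c := (lt_one_div hc hw4).1 h4
  have hw1_lt : w1 < a / c ^ 2 := lt_div_sq_of_lt_mul_div hc hw1 hw4 hw4_lt h1
  have hw3_lt : w3 < a / c ^ 2 / (c / k - 1) := by
    rw [lt_div_iff₀' hpos]
    exact (div_sub_one_mul_lt_of_lt_add_div_mul hk hw3 h3).trans hw1_lt
  rw [mul_div_assoc, ← div_div]
  linarith

theorem four_agent_arith_case1_general {a c k : F} (hk : 0 < k) (hck : k < c)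
    (hc : 1 / c + a / c ^ 2 + 2 * a / (c ^ 2 * (c / k - 1)) ≤ 1) {w1 w2 w3 w4 : F}
    (hw1 : 0 < w1) (hw3 : 0 < w3) (hw4 : 0 < w4) (hw23 : w2 ≤ w3)
    (hsum : w1 + w2 + w3 + w4 = 1) :
    min (min (1 / w4) ((w1 + w3) / w3 * k)) (a * (w4 / w1)) ≤ c := by
  by_contra! h
  exact ((sum_lt_of_lt_min hk hck hw1 hw3 hw4 hw23 h).trans_le hc).ne hsum

end

/-- with `k = (√3+1)/2` and `c > k` satisfying
`1/c + 20/(17c²) + 40/(17c²(2c/(√3+1)−1)) = 1`, for all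
`0 < w₁ ≤ w₂ ≤ w₃ ≤ w₄` summing to `1` with `w₁/w₃ ≥ w₂/w₄`, we have
`min(1/w₄, ((w₁+w₃)/w₃)·k, (20/17)·(w₄/w₁)) ≤ c`. -/
theorem four_agent_arith_case1 (k c : ℝ)
    (hk : k = (Real.sqrt 3 + 1) / 2) (hck : k < c)
    (hc : 1 / c + 20 / (17 * c ^ 2) +
      40 / (17 * c ^ 2 * (2 * c / (Real.sqrt 3 + 1) - 1)) = 1) :
    ∀ w1 w2 w3 w4 : ℝ, 0 < w1 → w1 ≤ w2 → w2 ≤ w3 → w3 ≤ w4 →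
      w1 + w2 + w3 + w4 = 1 → w2 / w4 ≤ w1 / w3 →
      min (min (1 / w4) ((w1 + w3) / w3 * k)) (20 / 17 * (w4 / w1)) ≤ c := by
  intro w1 w2 w3 w4 hw1 hw12 hw23 hw34 hsum _
  have hk_pos : 0 < k := by rw [hk]; positivity
  have hck_div : 2 * c / (Real.sqrt 3 + 1) = c / k := by rw [hk]; field_simp
  have hc_eq : 1 / c + 20 / 17 / c ^ 2 + 2 * (20 / 17) / (c ^ 2 * (c / k - 1)) = 1 := by
    rw [← hck_div, ← mul_div_assoc, div_div, div_div, ← mul_assoc]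
    rwa [show (2 : ℝ) * 20 = 40 by norm_num]
  exact four_agent_arith_case1_general hk_pos hck hc_eq.le hw1 (by linarith) (by linarith)
    hw23 hsum
end

section
/- For all real numbers w_1, w_2, w_3, w_4 with 0 < w_1 ≤ w_2 ≤ w_3 ≤ w_4, w_1 + w_2 + w_3 + w_4 = 1, and w_1/w_3 < w_2/w_4, we have min( ((w_2 + w_4)/w_4)·(w_4/w_3) , ((w_2 + w_4)/w_4)·((√3+1)/2) ) ≤ 2.5. -/
/-!
Write `b, c, d` for `w₂, w₃, w₄` and `t` for `(√3 + 1) / 2`, so that the two entries of the minimum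
are `(b + d) / c` and `(b + d) * t / d`. Comparing `d` with `b * t` shows that the minimum is at
most `t + 1`: if `b * t ≤ d`, then `(b + d) * t ≤ d * (t + 1)`, and if `d ≤ b * t`, then
`b + d ≤ b * (t + 1) ≤ c * (t + 1)`. Finally `t + 1 = (√3 + 3) / 2 ≤ 5 / 2`.
-/

section OrderedField

variable {K : Type*} [Field K] [LinearOrder K] [IsStrictOrderedRing K] {b c d t : K}

theorem add_div_le_add_one_of_le_mul (hc : 0 < c) (hbc : b ≤ c) (ht : 0 ≤ t + 1)
    (hdb : d ≤ b * t) : (b + d) / c ≤ t + 1 := by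
  rw [div_le_iff₀' hc]
  calc b + d ≤ b * (t + 1) := by linarith
    _ ≤ c * (t + 1) := by gcongr

theorem add_div_mul_le_add_one_of_mul_le (hd : 0 < d) (hbd : b * t ≤ d) :
    (b + d) / d * t ≤ t + 1 := by
  rw [div_mul_eq_mul_div, div_le_iff₀' hd]
  linarith

theorem min_add_div_mul_le_add_one (hc : 0 < c) (hd : 0 < d) (hbc : b ≤ c) (ht : 0 ≤ t + 1) :
    min ((b + d) / d * (d / c)) ((b + d) / d * t) ≤ t + 1 := by
  rw [div_mul_div_cancel₀ hd.ne']
  rcases le_total d (b * t) with hdb | hbd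
  · exact min_le_of_left_le (add_div_le_add_one_of_le_mul hc hbc ht hdb)
  · exact min_le_of_right_le (add_div_mul_le_add_one_of_mul_le hd hbd)

end OrderedField

theorem four_agent_arith_case2_general {w2 w3 w4 : ℝ} (h3 : 0 < w3) (h4 : 0 < w4)
    (h23 : w2 ≤ w3) :
    min ((w2 + w4) / w4 * (w4 / w3))
      ((w2 + w4) / w4 * ((Real.sqrt 3 + 1) / 2)) ≤ (Real.sqrt 3 + 3) / 2 :=
  (min_add_div_mul_le_add_one h3 h4 h23 (by positivity)).trans_eq (by ring)

theorem sqrt_three_le_two : Real.sqrt 3 ≤ 2 :=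
  Real.sqrt_le_iff.mpr (by norm_num)

/-- for all `0 < w₁ ≤ w₂ ≤ w₃ ≤ w₄` summing to `1` with
`w₁/w₃ < w₂/w₄`, we have
`min(((w₂+w₄)/w₄)·(w₄/w₃), ((w₂+w₄)/w₄)·((√3+1)/2)) ≤ 2.5`. -/
theorem four_agent_arith_case2 :
    ∀ w1 w2 w3 w4 : ℝ, 0 < w1 → w1 ≤ w2 → w2 ≤ w3 → w3 ≤ w4 →
      w1 + w2 + w3 + w4 = 1 → w1 / w3 < w2 / w4 →
      min ((w2 + w4) / w4 * (w4 / w3))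
        ((w2 + w4) / w4 * ((Real.sqrt 3 + 1) / 2)) ≤ 2.5 := by
  intro w1 w2 w3 w4 h1 h12 h23 h34 _ _
  have h3 : 0 < w3 := h1.trans_le (h12.trans h23)
  exact (four_agent_arith_case2_general h3 (h3.trans_le h34) h23).trans
    (by linarith [sqrt_three_le_two])
end
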